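/- Fix a common factor dimension a. Let C ∈ ℝ^{n_x×n}, G^{(1)},…,G^{(γ)} ∈ ℝ^{n_x×n}, Ē_Y ∈ ℕ^{a×γ}, constraint matrices A^{(1)},…,A^{(γ)} ∈ ℝ^{n_c×n_a}, B ∈ ℝ^{n_c×n_a}, R̄_Y ∈ ℕ^{a×γ}; and let c ∈ ℝ^n, G_P ∈ ℝ^{n×h}, Ē_P ∈ ℕ^{a×h}, A_P ∈ ℝ^{m_P×q}, b_P ∈ ℝ^{m_P}, R̄_P ∈ ℕ^{a×q}. Define the dependency-preserving product set S = { (C + Σ_{i=1}^{γ} (Π_{k=1}^{a} α_k^{Ē_Y(k,i)}) G^{(i)}) · (c + Σ_{j=1}^{h} (Π_{k=1}^{a} α_k^{Ē_P(k,j)}) G_P(·,j)) : α ∈ [-1,1]^a, Σ_{i=1}^{γ} (Π_k α_k^{R̄_Y(k,i)}) A^{(i)} = B and Σ_{j=1}^{q} (Π_k α_k^{R̄_P(k,j)}) A_P(·,j) = b_P } ⊆ ℝ^{n_x}. Then S equals the constrained polynomial zonotope with center C·c; with γ + h + γ·h generator columns given in order by G^{(i)}·c (i = 1,…,γ), C·G_P(·,j)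 (j = 1,…,h), and G^{(i)}·G_P(·,j) (ordered by i = 1,…,γ and within i by j = 1,…,h); with generator exponent columns, in the same order, Ē_Y(·,i), Ē_P(·,j), and Ē_Y(·,i)+Ē_P(·,j); with γ + q constraint columns [vec(A^{(i)}); 0_{m_P}] (i = 1,…,γ) and [0_{n_c·n_a}; A_P(·,j)] (j = 1,…,q); with constraint right-hand side [vec(B); b_P] and constraint exponent matrix [R̄_Y R̄_P]. This multiplication between a CPMZ and a CPZ is algebraically exact. -/

import Mathlib

/-!
Both sides are images of sets of factors `α ∈ [-1,1]^a`, and the proof compares them for each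
fixed `α`. The monomials in `α` are then just scalars `u i` and `v j`, and the values agree because
the product of the two affine expressions `(C + ∑ u i • G i) (c + ∑ v j • g j)` expands
bilinearly (`mulVec_expand`); the monomial of an exponent sum is the product of the monomials.
The constraints agree because a matrix equation holds iff it holds entrywise, and the zero blocks of
the stacked constraint matrix decouple the two systems.
-/

open scoped BigOperators

/-- A constrained polynomial zonotope with center `c`, generator matrix `G`,
generator exponent matrix `E`, constraint matrix `A`, constraint vector `b`,
and constraint exponent matrix `R`. -/
def CPZ {N P H M Q : Type*} [Fintype P] [Fintype H] [Fintype Q]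
    (c : N → ℝ) (G : N → H → ℝ) (E : P → H → ℕ)
    (A : M → Q → ℝ) (b : M → ℝ) (R : P → Q → ℕ) : Set (N → ℝ) :=
  { x | ∃ α : P → ℝ, (∀ k, α k ∈ Set.Icc (-1 : ℝ) 1) ∧
      (∀ r, ∑ j, (∏ k, α k ^ R k j) * A r j = b r) ∧
      x = fun ℓ => c ℓ + ∑ i, (∏ k, α k ^ E k i) * G ℓ i }

/-- Bilinear expansion of an affine matrix expression applied to an affine vector expression, with
the scalars in place of the monomials. -/
lemma mulVec_expand {ι κ m n : Type*} [Fintype ι] [Fintype κ] [Fintype n]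
    (C : Matrix m n ℝ) (G : ι → Matrix m n ℝ) (c : n → ℝ) (g : n → κ → ℝ)
    (u : ι → ℝ) (v : κ → ℝ) (r : m) :
    (C + ∑ i, u i • G i).mulVec (fun l => c l + ∑ j, v j * g l j) r =
      C.mulVec c r + (∑ i, u i * (G i).mulVec c r +
        (∑ j, v j * C.mulVec (fun l => g l j) r +
          ∑ i, ∑ j, u i * v j * (G i).mulVec (fun l => g l j) r)) := by
  have hvec : (fun l => c l + ∑ j, v j * g l j) = c + ∑ j, v j • (fun l => g l j) := by
    ext l
    simp
  have hmul (M : Matrix m n ℝ) : M.mulVec (c + ∑ j, v j • (fun l => g l j)) r =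
      M.mulVec c r + ∑ j, v j * M.mulVec (fun l => g l j) r := by
    simp [Matrix.mulVec_add, Matrix.mulVec_sum, Matrix.mulVec_smul]
  rw [hvec, Matrix.add_mulVec, Matrix.sum_mulVec]
  simp only [Pi.add_apply, Finset.sum_apply, Matrix.smul_mulVec, Pi.smul_apply, smul_eq_mul,
    hmul, mul_add, Finset.sum_add_distrib, Finset.mul_sum, mul_assoc]
  ring

/-- Exact multiplication between a CPMZ and a CPZ over a common factor dimension:
the dependency-preserving product set equals the constructed constrained polynomial
zonotope, so the multiplication is algebraically exact. -/
theorem stmt4 {nx n a γ nc na hP mP q : ℕ}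
    (C : Matrix (Fin nx) (Fin n) ℝ) (G : Fin γ → Matrix (Fin nx) (Fin n) ℝ)
    (EY : Fin a → Fin γ → ℕ)
    (A : Fin γ → Matrix (Fin nc) (Fin na) ℝ) (B : Matrix (Fin nc) (Fin na) ℝ)
    (RY : Fin a → Fin γ → ℕ)
    (c : Fin n → ℝ) (GP : Fin n → Fin hP → ℝ) (EP : Fin a → Fin hP → ℕ)
    (AP : Fin mP → Fin q → ℝ) (bP : Fin mP → ℝ) (RP : Fin a → Fin q → ℕ) :
    { y : Fin nx → ℝ | ∃ α : Fin a → ℝ,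
        (∀ k, α k ∈ Set.Icc (-1 : ℝ) 1) ∧
        (∑ i, (∏ k, α k ^ RY k i) • A i) = B ∧
        (∀ r, ∑ j, (∏ k, α k ^ RP k j) * AP r j = bP r) ∧
        y = (C + ∑ i, (∏ k, α k ^ EY k i) • G i).mulVec
              (fun ℓ => c ℓ + ∑ j, (∏ k, α k ^ EP k j) * GP ℓ j) }
    = CPZ (P := Fin a) (H := Fin γ ⊕ (Fin hP ⊕ Fin γ × Fin hP))
        (M := (Fin nc × Fin na) ⊕ Fin mP) (Q := Fin γ ⊕ Fin q)
        (C.mulVec c)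
        -- generator columns: G⁽ⁱ⁾·c, C·G_P(·,j), G⁽ⁱ⁾·G_P(·,j)
        (fun r idx => match idx with
          | Sum.inl i => (G i).mulVec c r
          | Sum.inr (Sum.inl j) => C.mulVec (fun ℓ => GP ℓ j) r
          | Sum.inr (Sum.inr ij) => (G ij.1).mulVec (fun ℓ => GP ℓ ij.2) r)
        -- generator exponent columns: Ē_Y(·,i), Ē_P(·,j), Ē_Y(·,i) + Ē_P(·,j)
        (fun k idx => match idx with
          | Sum.inl i => EY k i
          | Sum.inr (Sum.inl j) => EP k j
          | Sum.inr (Sum.inr ij) => EY k ij.1 + EP k ij.2)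
        -- constraint columns: [vec A⁽ⁱ⁾; 0] and [0; A_P(·,j)]
        (fun r j => match r, j with
          | Sum.inl rc, Sum.inl i => A i rc.1 rc.2
          | Sum.inr rr, Sum.inr jj => AP rr jj
          | _, _ => 0)
        -- constraint right-hand side [vec B; b_P]
        (fun r => match r with
          | Sum.inl rc => B rc.1 rc.2
          | Sum.inr rr => bP rr)
        -- constraint exponent matrix [R̄_Y R̄_P]
        (fun k j => match j with
          | Sum.inl i => RY k i
          | Sum.inr jj => RP k jj) := by
  ext y
  simp only [CPZ, Set.mem_ofPred_eq]
  refine exists_congr fun α => and_congr_right fun _ => ?_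
  rw [← and_assoc]
  refine and_congr ?_ ?_
  · simp [Sum.forall, ← Matrix.ext_iff, Matrix.sum_apply]
  · refine Eq.congr_right (funext fun r => ?_)
    rw [mulVec_expand]
    simp only [Fintype.sum_sum_type, Fintype.sum_prod_type, pow_add, Finset.prod_mul_distrib]
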